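/- arXiv:math/9801139 — 2 statements merged into one kernel-verified Lean document; each statement's English description precedes it below -/
import Mathlib

section
/- Let n ≥ 1 and R > 0. If φ : ℝⁿ → ℂ is a smooth function with compact support contained in the open ball B_R(0) and ∫_{ℝⁿ} φ(x) dⁿx = 0, then there exist smooth functions h₁, …, hₙ : ℝⁿ → ℂ, each with compact support contained in B_R(0), such that φ = Σ_{i=1}^{n} ∂h_i/∂x^i. -/
open MeasureTheory

/-- The `i`-th partial derivative of a function on `ℝⁿ` (modeled as Euclidean space). -/
noncomputable def partialDeriv {n : ℕ} (f : EuclideanSpace ℝ (Fin n) → ℂ) (i : Fin n) :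
    EuclideanSpace ℝ (Fin n) → ℂ :=
  fun x => fderiv ℝ f x (EuclideanSpace.single i 1)

namespace DivRep

open Set Filter Topology

abbrev EE (n : ℕ) := EuclideanSpace ℝ (Fin n)

noncomputable abbrev ee {n : ℕ} (i : Fin n) : EE n := EuclideanSpace.single i 1

lemma norm_line {n : ℕ} (x : EE n) (i : Fin n) (s : ℝ) :
    ‖x + s • ee i‖ ^ 2 = ‖x‖ ^ 2 - (x i) ^ 2 + (x i + s) ^ 2 := by
  rw [norm_add_sq_real, inner_smul_right, EuclideanSpace.inner_single_right, norm_smul]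
  simp
  ring

lemma coord_sq_le {n : ℕ} (x : EE n) (i : Fin n) : (x i) ^ 2 ≤ ‖x‖ ^ 2 := by
  have := norm_line x i (-(x i))
  have h2 := sq_nonneg ‖x + (-(x i)) • ee i‖
  nlinarith

lemma line_coord {n : ℕ} (x : EE n) (i j : Fin n) (s : ℝ) :
    (x + s • ee i) j = x j + if j = i then s else 0 := by
  simp

/-- vanishing outside the ball of squared radius `a` -/
def Van {n : ℕ} (a : ℝ) (f : EE n → ℂ) : Prop := ∀ x, a < ‖x‖ ^ 2 → f x = 0

lemma Van.mono {n : ℕ} {a b : ℝ} {f : EE n → ℂ} (h : Van a f) (hab : a ≤ b) : Van b f :=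
  fun x hx => h x (lt_of_le_of_lt hab hx)

lemma Van.tsupport {n : ℕ} {a : ℝ} {f : EE n → ℂ} (h : Van a f) :
    tsupport f ⊆ {x | ‖x‖ ^ 2 ≤ a} := by
  apply closure_minimal
  · intro x hx
    by_contra hc
    exact hx (h x (not_le.1 hc))
  · exact isClosed_le (by fun_prop) continuous_const

lemma Van.compact {n : ℕ} {a : ℝ} {f : EE n → ℂ} (h : Van a f) : HasCompactSupport f := by
  apply HasCompactSupport.of_support_subset_isCompact (isCompact_closedBall (0 : EE n) (|a| + 1))
  intro x hx
  have := h.tsupport (subset_tsupport f hx)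
  simp only [mem_ofPred_eq] at this
  rw [mem_closedBall_zero_iff]
  by_contra hc
  push Not at hc
  nlinarith [le_abs_self a, abs_nonneg a, norm_nonneg x]

lemma van_line {n : ℕ} {a : ℝ} {f : EE n → ℂ} (h : Van a f) (x : EE n) (i : Fin n) (s ρ : ℝ)
    (hx : ‖x‖ ≤ ρ) (hs : ρ + |a| + 1 < |s|) : f (x + s • ee i) = 0 := by
  apply h
  rw [norm_line]
  have h1 := coord_sq_le x i
  have h2 : |x i| ≤ ρ := (abs_le_of_sq_le_sq h1 (norm_nonneg x)).trans hx
  have h3 : |a| + 1 < |x i + s| := by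
    have : |s| ≤ |x i + s| + |x i| := by
      have := abs_sub (x i + s) (x i)
      simpa using this
    linarith
  have h4 : (|a| + 1) ^ 2 < (x i + s) ^ 2 := by
    rw [← sq_abs (x i + s)]
    have := abs_nonneg a
    gcongr
  nlinarith [le_abs_self a, abs_nonneg a]

lemma line_compact {n : ℕ} {a : ℝ} {f : EE n → ℂ} (h : Van a f) (x : EE n) (i : Fin n) :
    HasCompactSupport (fun s : ℝ => f (x + s • ee i)) := by
  apply HasCompactSupport.of_support_subset_isCompact
    (isCompact_closedBall (0 : ℝ) (‖x‖ + |a| + 1))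
  intro s hs
  rw [mem_closedBall_zero_iff]
  by_contra hc
  push Not at hc
  exact hs (van_line h x i s _ le_rfl hc)

lemma line_integrable {n : ℕ} {a : ℝ} {f : EE n → ℂ} (h : Van a f) (hf : Continuous f)
    (x : EE n) (i : Fin n) : Integrable (fun s : ℝ => f (x + s • ee i)) :=
  Continuous.integrable_of_hasCompactSupport (by fun_prop) (line_compact h x i)

lemma smooth_param {n : ℕ} {a : ℝ} {F : EE n → ℂ} (h : Van a F) (hF : ContDiff ℝ (⊤ : ℕ∞) F)
    (i : Fin n) (w : ℝ → ℝ) (hw : LocallyIntegrable w) :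
    ContDiff ℝ (⊤ : ℕ∞) (fun x : EE n => ∫ s, w s • F (x + s • ee i)) := by
  rw [contDiff_iff_contDiffAt]
  intro x
  set ρ := ‖x‖ + 1 with hρ
  have key := contDiffOn_convolution_right_with_param (𝕜 := ℝ) (n := ⊤) (μ := (volume : Measure ℝ))
    (ContinuousLinearMap.lsmul ℝ ℝ : ℝ →L[ℝ] ℂ →L[ℝ] ℂ)
    (g := fun (p : EE n) (u : ℝ) => F (p + (-u) • ee i)) (s := Metric.ball (0 : EE n) ρ)
    (k := Metric.closedBall (0 : ℝ) (ρ + |a| + 1)) Metric.isOpen_ball (isCompact_closedBall _ _)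
    (by
      intro p u hp hu
      rw [mem_closedBall_zero_iff] at hu
      rw [mem_ball_zero_iff] at hp
      push Not at hu
      exact van_line h p i (-u) ρ hp.le (by simpa using hu)) hw
    (by
      apply ContDiff.contDiffOn
      apply hF.comp
      fun_prop)
  have hx : (x, (0 : ℝ)) ∈ Metric.ball (0 : EE n) ρ ×ˢ (univ : Set ℝ) := by
    simp [hρ]
  have k2 := (key.contDiffAt ((Metric.isOpen_ball.prod isOpen_univ).mem_nhds hx))
  have k3 := ContDiffAt.comp (f := fun y : EE n => (y, (0 : ℝ))) x k2 (by fun_prop)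
  convert k3 using 1
  ext y
  simp [convolution_def]

lemma g_smooth {n : ℕ} {a : ℝ} {F : EE n → ℂ} (h : Van a F) (hF : ContDiff ℝ (⊤ : ℕ∞) F)
    (i : Fin n) : ContDiff ℝ (⊤ : ℕ∞) (fun x : EE n => ∫ s : ℝ, F (x + s • ee i)) := by
  have := smooth_param h hF i (fun _ => 1) (continuous_const.locallyIntegrable)
  simpa using this

lemma h_smooth {n : ℕ} {a : ℝ} {F : EE n → ℂ} (h : Van a F) (hF : ContDiff ℝ (⊤ : ℕ∞) F)
    (i : Fin n) : ContDiff ℝ (⊤ : ℕ∞) (fun x : EE n => ∫ s in Iic (0 : ℝ), F (x + s • ee i)) := by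
  have := smooth_param h hF i ((Iic 0).indicator (fun _ => 1))
    ((continuous_const (y := (1 : ℝ))).locallyIntegrable.indicator measurableSet_Iic)
  convert this using 2 with x
  rw [← integral_indicator measurableSet_Iic]
  congr 1
  ext s
  by_cases hs : s ∈ Iic (0 : ℝ) <;> simp only [indicator, hs, if_true, if_false, one_smul, zero_smul]

lemma h_deriv {n : ℕ} {a : ℝ} {F : EE n → ℂ} (h : Van a F) (hF : ContDiff ℝ (⊤ : ℕ∞) F)
    (i : Fin n) (x : EE n) :
    fderiv ℝ (fun x : EE n => ∫ s in Iic (0 : ℝ), F (x + s • ee i)) x (ee i) = F x := by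
  have hd := ((h_smooth h hF i).differentiable (by simp)) x
  have hFc := hF.continuous
  have h1 : HasDerivAt (fun τ : ℝ => ∫ s in Iic (0 : ℝ), F ((x + τ • ee i) + s • ee i))
      (fderiv ℝ (fun x : EE n => ∫ s in Iic (0 : ℝ), F (x + s • ee i)) x (ee i)) 0 := by
    have := hd.hasFDerivAt.hasLineDerivAt (ee i)
    exact this
  have hint := line_integrable h hFc x i
  have h2 : (fun τ : ℝ => ∫ s in Iic (0 : ℝ), F ((x + τ • ee i) + s • ee i)) =
      fun τ => (∫ s in Iic (0 : ℝ), F (x + s • ee i)) + ∫ s in (0 : ℝ)..τ, F (x + s • ee i) := by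
    ext τ
    rw [← intervalIntegral.integral_Iic_sub_Iic hint.integrableOn hint.integrableOn]
    have : ∫ s in Iic τ, F (x + s • ee i) = ∫ s in Iic (0 : ℝ), F ((x + τ • ee i) + s • ee i) := by
      rw [← integral_indicator measurableSet_Iic, ← integral_indicator measurableSet_Iic,
        ← integral_add_right_eq_self _ τ]
      congr 1
      ext s
      by_cases hs : s ≤ 0
      · have hs2 : s + τ ≤ τ := by linarith
        simp only [indicator, mem_Iic, hs, hs2, if_true]
        rw [add_smul, add_assoc, add_comm (s • ee i)]
      · simp [indicator, hs]
    rw [this]; ring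
  rw [h2] at h1
  have h3 : HasDerivAt (fun τ => (∫ s in Iic (0 : ℝ), F (x + s • ee i)) +
      ∫ s in (0 : ℝ)..τ, F (x + s • ee i)) (F (x + (0 : ℝ) • ee i)) 0 := by
    apply HasDerivAt.const_add
    have hc : Continuous (fun s : ℝ => F (x + s • ee i)) := by fun_prop
    exact hc.integral_hasStrictDerivAt 0 0 |>.hasDerivAt
  have := h1.unique h3
  simpa using this

lemma h_van {n : ℕ} {a : ℝ} {F : EE n → ℂ} (h : Van a F) (hF : Continuous F)
    (i : Fin n) (h0 : ∀ x : EE n, ∫ s : ℝ, F (x + s • ee i) = 0) :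
    Van a (fun x : EE n => ∫ s in Iic (0 : ℝ), F (x + s • ee i)) := by
  intro x hx
  have hint := line_integrable h hF x i
  show ∫ s in Iic (0 : ℝ), F (x + s • ee i) = 0
  rcases le_total (x i) 0 with hi | hi
  · apply setIntegral_eq_zero_of_forall_eq_zero
    intro s hs
    apply h
    rw [norm_line]
    have : s ≤ 0 := hs
    nlinarith
  · have h1 := integral_add_compl (measurableSet_Iic (a := (0 : ℝ))) hint
    rw [h0 x] at h1
    have h2 : ∫ s in (Iic (0 : ℝ))ᶜ, F (x + s • ee i) = 0 := by
      apply setIntegral_eq_zero_of_forall_eq_zero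
      intro s hs
      apply h
      rw [norm_line]
      have : 0 < s := by simpa using hs
      nlinarith
    rw [h2, add_zero] at h1
    exact h1

lemma g_inv {n : ℕ} (F : EE n → ℂ) (i : Fin n) (x : EE n) (t : ℝ) :
    ∫ s : ℝ, F ((x + t • ee i) + s • ee i) = ∫ s : ℝ, F (x + s • ee i) := by
  rw [← integral_add_right_eq_self (fun s : ℝ => F (x + s • ee i)) t]
  congr 1
  ext s
  rw [add_smul, add_assoc, add_comm (t • ee i)]

/-- representable as a divergence of fields vanishing outside squared radius `a`. -/
def Rep {n : ℕ} (a : ℝ) (f : EE n → ℂ) : Prop :=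
  ∃ h : Fin n → EE n → ℂ, (∀ i, ContDiff ℝ (⊤ : ℕ∞) (h i)) ∧ (∀ i, Van a (h i)) ∧
    ∀ x, f x = ∑ i, fderiv ℝ (h i) x (ee i)

lemma Rep.add {n : ℕ} {a : ℝ} {f g : EE n → ℂ} (hf : Rep a f) (hg : Rep a g) :
    Rep a (fun x => f x + g x) := by
  obtain ⟨h, h1, h2, h3⟩ := hf
  obtain ⟨k, k1, k2, k3⟩ := hg
  refine ⟨fun i x => h i x + k i x, fun i => (h1 i).add (k1 i), fun i x hx => ?_, fun x => ?_⟩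
  · simp [h2 i x hx, k2 i x hx]
  · simp only
    rw [h3, k3, ← Finset.sum_add_distrib]
    refine Finset.sum_congr rfl fun i _ => ?_
    rw [fderiv_fun_add ((h1 i).differentiable (by simp) x) ((k1 i).differentiable (by simp) x)]
    rfl

lemma Rep.mono {n : ℕ} {a b : ℝ} {f : EE n → ℂ} (hf : Rep a f) (hab : a ≤ b) : Rep b f := by
  obtain ⟨h, h1, h2, h3⟩ := hf
  exact ⟨h, h1, fun i => (h2 i).mono hab, h3⟩

lemma Rep.zero {n : ℕ} (a : ℝ) : Rep a (fun _ : EE n => 0) :=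
  ⟨fun _ _ => 0, fun _ => contDiff_const, fun _ _ _ => rfl, fun x => by simp⟩

lemma Rep.single {n : ℕ} {a : ℝ} (j : Fin n) {k : EE n → ℂ} (hk : ContDiff ℝ (⊤ : ℕ∞) k)
    (hv : Van a k) : Rep a (fun x => fderiv ℝ k x (ee j)) := by
  refine ⟨fun i => if i = j then k else fun _ => 0, fun i => ?_, fun i => ?_, fun x => ?_⟩
  · simp only
    split_ifs
    · exact hk
    · exact contDiff_const
  · simp only
    split_ifs
    · exact hv
    · exact fun _ _ => rfl
  · rw [Finset.sum_eq_single j]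
    · simp
    · intro i _ hi
      simp [hi]
    · simp

lemma step {n : ℕ} {a ε : ℝ} (hε : 0 < ε) {η : ℝ → ℂ} (hη : ContDiff ℝ (⊤ : ℕ∞) η)
    (hηs : ∀ s, ε < |s| → η s = 0) (hη1 : ∫ s, η s = 1)
    {φ : EE n → ℂ} (h : Van a φ) (hφ : ContDiff ℝ (⊤ : ℕ∞) φ) (i : Fin n)
    (ψ : EE n → ℂ) (hψ : ψ = fun x => η (x i) * ∫ s : ℝ, φ (x + s • ee i)) :
    ContDiff ℝ (⊤ : ℕ∞) ψ ∧ Van (a + ε ^ 2) ψ ∧ Rep (a + ε ^ 2) (fun x => φ x - ψ x) := by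
  have hψs : ContDiff ℝ (⊤ : ℕ∞) ψ := by
    rw [hψ]
    exact (hη.comp (by fun_prop)).mul (g_smooth h hφ i)
  have hψv : Van (a + ε ^ 2) ψ := by
    intro x hx
    rw [hψ]
    simp only
    by_cases hc : ε < |x i|
    · rw [hηs _ hc, zero_mul]
    · have : ∀ s : ℝ, φ (x + s • ee i) = 0 := by
        intro s
        apply h
        rw [norm_line]
        have : (x i) ^ 2 ≤ ε ^ 2 := by
          rw [← sq_abs (x i)]
          push Not at hc
          gcongr
        nlinarith [sq_nonneg (x i + s)]
      simp [this]
  refine ⟨hψs, hψv, ?_⟩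
  have hFs : ContDiff ℝ (⊤ : ℕ∞) (fun x => φ x - ψ x) := hφ.sub hψs
  have hφv : Van (a + ε ^ 2) φ := h.mono (by nlinarith)
  have hFv : Van (a + ε ^ 2) (fun x => φ x - ψ x) := by
    intro x hx
    simp [hφv x hx, hψv x hx]
  have h0 : ∀ x : EE n, ∫ s : ℝ, (fun x => φ x - ψ x) (x + s • ee i) = 0 := by
    intro x
    simp only
    rw [integral_sub (line_integrable h hφ.continuous x i)
      (line_integrable hψv hψs.continuous x i)]
    have : ∫ s : ℝ, ψ (x + s • ee i) = ∫ s : ℝ, φ (x + s • ee i) := by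
      rw [hψ]
      simp only [g_inv, line_coord, if_true]
      rw [integral_mul_const]
      have := integral_add_left_eq_self η (x i)  (μ := volume)
      rw [this, hη1, one_mul]
    rw [this, sub_self]
  have := Rep.single i (h_smooth hFv hFs i) (h_van hFv hFs.continuous i h0)
  simpa only [h_deriv hFv hFs i] using this

lemma iter {n : ℕ} {a ε : ℝ} (hε : 0 < ε) {η : ℝ → ℂ} (hη : ContDiff ℝ (⊤ : ℕ∞) η)
    (hηs : ∀ s, ε < |s| → η s = 0) (hη1 : ∫ s, η s = 1)
    {φ : EE n → ℂ} (h : Van a φ) (hφ : ContDiff ℝ (⊤ : ℕ∞) φ) (S : Finset (Fin n)) :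
    ∃ g ψ : EE n → ℂ, (∀ i ∈ S, ∀ x : EE n, ∀ t : ℝ, g (x + t • ee i) = g x) ∧
      (∀ x, ψ x = (∏ i ∈ S, η (x i)) * g x) ∧
      ContDiff ℝ (⊤ : ℕ∞) ψ ∧ Van (a + S.card * ε ^ 2) ψ ∧
      Rep (a + S.card * ε ^ 2) (fun x => φ x - ψ x) := by
  induction S using Finset.induction_on with
  | empty => exact ⟨φ, φ, by simp, by simp, hφ, by simpa using h, by simpa using Rep.zero a⟩
  | insert j S hj ih =>
    obtain ⟨g, ψ, h1, h2, h3, h4, h5⟩ := ih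
    obtain ⟨k1, k2, k3⟩ := step hε hη hηs hη1 h4 h3 j _ rfl
    have hc : a + ((insert j S).card : ℝ) * ε ^ 2 = a + S.card * ε ^ 2 + ε ^ 2 := by
      rw [Finset.card_insert_of_notMem hj]; push_cast; ring
    rw [hc]
    refine ⟨fun x => ∫ s : ℝ, g (x + s • ee j), _, ?_, ?_, k1, k2, ?_⟩
    · intro i hi x t
      rcases Finset.mem_insert.1 hi with rfl | hi
      · exact g_inv g i x t
      · refine integral_congr_ae (Eventually.of_forall fun s => ?_)
        simp only
        rw [add_right_comm, h1 i hi]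
    · intro x
      simp only
      rw [Finset.prod_insert hj, mul_assoc]
      refine congrArg (fun z : ℂ => η (x j) * z) ?_
      rw [← integral_const_mul]
      refine integral_congr_ae (Eventually.of_forall fun s => ?_)
      simp only
      rw [h2]
      congr 1
      refine Finset.prod_congr rfl fun i hi => ?_
      have : i ≠ j := by rintro rfl; exact hj hi
      rw [line_coord, if_neg this, add_zero]
    · have := (h5.mono (b := a + S.card * ε ^ 2 + ε ^ 2) (by nlinarith)).add k3
      simpa using this

lemma integral_rep {n : ℕ} {a : ℝ} {f : EE n → ℂ} (hf : Rep a f) : ∫ x, f x = 0 := by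
  obtain ⟨h, h1, h2, h3⟩ := hf
  simp_rw [h3]
  have hi : ∀ i, Integrable (fun x => fderiv ℝ (h i) x (ee i)) := by
    intro i
    have hc := (h1 i).continuous_fderiv (by simp)
    apply Continuous.integrable_of_hasCompactSupport (by fun_prop)
    exact (h2 i).compact.fderiv_apply (𝕜 := ℝ) _
  rw [integral_finsetSum _ fun i _ => hi i]
  refine Finset.sum_eq_zero fun i _ => ?_
  have := integral_mul_fderiv_eq_neg_fderiv_mul_of_integrable (μ := (volume : Measure (EE n)))
    (f := fun _ => (1 : ℂ)) (g := h i) (v := ee i) (by simp) (by simpa using hi i)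
    (by simpa using (h1 i).continuous.integrable_of_hasCompactSupport (h2 i).compact)
    (fun x _ => by fun_prop) (fun x _ => (h1 i).differentiable (by simp) x)
  simpa using this

lemma const_of_inv {n : ℕ} {g : EE n → ℂ}
    (hg : ∀ i, ∀ x : EE n, ∀ t : ℝ, g (x + t • ee i) = g x) (x : EE n) : g x = g 0 := by
  have : ∀ S : Finset (Fin n), g (∑ i ∈ S, x i • ee i) = g 0 := by
    intro S
    induction S using Finset.induction_on with
    | empty => simp
    | insert j S hj ih => rw [Finset.sum_insert hj, add_comm, hg, ih]
  rw [← this Finset.univ]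
  congr 1
  ext j
  simp [Pi.single_apply]

lemma integral_prod {n : ℕ} {η : ℝ → ℂ} (hη1 : ∫ s, η s = 1) :
    ∫ x : EE n, ∏ i, η (x i) = 1 := by
  have := (EuclideanSpace.volume_preserving_symm_measurableEquiv_toLp (Fin n)).integral_comp'
    (fun y : Fin n → ℝ => ∏ i, η (y i))
  have h2 := integral_fintype_prod_volume_eq_pow (ι := Fin n) η
  rw [h2, hη1, one_pow] at this
  exact this

lemma exists_eta {ε : ℝ} (hε : 0 < ε) : ∃ η : ℝ → ℂ, ContDiff ℝ (⊤ : ℕ∞) η ∧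
    (∀ s, ε < |s| → η s = 0) ∧ ∫ s, η s = 1 := by
  let b : ContDiffBump (0 : ℝ) := ⟨ε / 2, ε, by linarith, by linarith⟩
  refine ⟨fun s => (b.normed volume s : ℂ), ?_, ?_, ?_⟩
  · exact Complex.ofRealCLM.contDiff.comp b.contDiff_normed
  · intro s hs
    have : s ∉ Function.support (b.normed volume) := by
      rw [b.support_normed_eq]
      simp [b, hs.le]
    simpa using this
  · rw [integral_complex_ofReal, b.integral_normed]; simp

lemma exists_radius {n : ℕ} {R : ℝ} (hR : 0 < R) {φ : EE n → ℂ} (hφc : HasCompactSupport φ)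
    (hs : tsupport φ ⊆ Metric.ball (0 : EE n) R) : ∃ a, a < R ^ 2 ∧ Van a φ := by
  rcases (tsupport φ).eq_empty_or_nonempty with he | hne
  · refine ⟨0, by positivity, fun x _ => ?_⟩
    exact image_eq_zero_of_notMem_tsupport (by simp [he])
  · obtain ⟨y, hy, hmax⟩ := hφc.isCompact.exists_isMaxOn hne
      (continuous_norm (E := EE n)).continuousOn
    have hyR := mem_ball_zero_iff.1 (hs hy)
    refine ⟨‖y‖ ^ 2, by gcongr, fun x hx => ?_⟩
    apply image_eq_zero_of_notMem_tsupport
    intro hxs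
    have : ‖x‖ ≤ ‖y‖ := hmax hxs
    have : ‖x‖ ^ 2 ≤ ‖y‖ ^ 2 := by gcongr
    linarith

lemma main {n : ℕ} {R : ℝ} (hR : 0 < R) {φ : EE n → ℂ} (hφ : ContDiff ℝ (⊤ : ℕ∞) φ)
    (hφc : HasCompactSupport φ) (hs : tsupport φ ⊆ Metric.ball (0 : EE n) R)
    (hint : ∫ x, φ x = 0) : ∃ b, b < R ^ 2 ∧ Rep b φ := by
  obtain ⟨a, ha, hv⟩ := exists_radius hR hφc hs
  obtain ⟨ε, hε, hεa⟩ : ∃ ε : ℝ, 0 < ε ∧ a + n * ε ^ 2 < R ^ 2 := by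
    refine ⟨√((R ^ 2 - a) / (n + 1)), Real.sqrt_pos.2 (div_pos (by linarith) (by positivity)), ?_⟩
    rw [Real.sq_sqrt (div_nonneg (by linarith) (by positivity))]
    have : (n : ℝ) * ((R ^ 2 - a) / (n + 1)) < R ^ 2 - a := by
      rw [mul_div_assoc', div_lt_iff₀ (by positivity)]
      nlinarith
    linarith
  obtain ⟨η, e1, e2, e3⟩ := exists_eta hε
  obtain ⟨g, ψ, h1, h2, h3, h4, h5⟩ := iter hε e1 e2 e3 hv hφ Finset.univ
  rw [Finset.card_univ, Fintype.card_fin] at h4 h5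
  have hg := const_of_inv (fun i => h1 i (Finset.mem_univ i))
  have hi := integral_rep h5
  rw [integral_sub (hφ.continuous.integrable_of_hasCompactSupport hφc)
    (h3.continuous.integrable_of_hasCompactSupport h4.compact), hint, zero_sub,
    neg_eq_zero] at hi
  have hψ : ∀ x, ψ x = (∏ i, η (x i)) * g 0 := fun x => by rw [h2, hg]
  simp_rw [hψ] at hi
  rw [integral_mul_const, integral_prod e3, one_mul] at hi
  refine ⟨_, hεa, ?_⟩
  simpa [hψ, hi] using h5

end DivRep

/-- If `n ≥ 1`, `R > 0` and `φ : ℝⁿ → ℂ` is a smooth function with compact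
support contained in the open Euclidean ball `B_R(0)` whose Lebesgue integral vanishes, then
there are smooth functions `h₁, …, hₙ`, each with compact support contained in `B_R(0)`,
such that `φ = Σᵢ ∂hᵢ/∂xⁱ`. -/
theorem exists_divergence_rep_of_integral_eq_zero
    (n : ℕ) (hn : 1 ≤ n) (R : ℝ) (hR : 0 < R)
    (φ : EuclideanSpace ℝ (Fin n) → ℂ)
    (hφ : ContDiff ℝ (⊤ : ℕ∞) φ)
    (hφc : HasCompactSupport φ)
    (hφsupp : tsupport φ ⊆ Metric.ball (0 : EuclideanSpace ℝ (Fin n)) R)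
    (hint : ∫ x, φ x = 0) :
    ∃ h : Fin n → EuclideanSpace ℝ (Fin n) → ℂ,
      (∀ i, ContDiff ℝ (⊤ : ℕ∞) (h i)) ∧
      (∀ i, HasCompactSupport (h i)) ∧
      (∀ i, tsupport (h i) ⊆ Metric.ball (0 : EuclideanSpace ℝ (Fin n)) R) ∧
      φ = fun x => ∑ i, partialDeriv (h i) i x := by
  obtain ⟨b, hb, h, h1, h2, h3⟩ := DivRep.main hR hφ hφc hφsupp hint
  refine ⟨h, h1, fun i => (h2 i).compact, fun i x hx => ?_, ?_⟩
  · have := (h2 i).tsupport hx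
    simp only [Set.mem_ofPred_eq] at this
    rw [mem_ball_zero_iff]
    exact lt_of_pow_lt_pow_left₀ 2 hR.le (lt_of_le_of_lt this hb)
  · ext x
    exact h3 x
end

section
/- Let n ≥ 1 and let f ∈ C_c^∞(ℝⁿ). Then there exist h₁, …, hₙ ∈ C_c^∞(ℝⁿ) with f = Σ_{i=1}^{n} ∂h_i/∂x^i if and only if ∫_{ℝⁿ} f(x) dⁿx = 0. In other words, the linear span of partial derivatives of compactly supported smooth functions is exactly the kernel of the integration functional, a subspace of codimension one in C_c^∞(ℝⁿ). -/
open MeasureTheory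

section helpers

lemma cs_bound {E : Type*} [NormedAddCommGroup E] {f : E → ℂ} (hf : HasCompactSupport f) :
    ∃ R : ℝ, ∀ x, f x ≠ 0 → ‖x‖ ≤ R := by
  obtain ⟨R, hR⟩ := hf.isCompact.isBounded.subset_closedBall 0
  refine ⟨R, fun x hx => ?_⟩
  simpa using hR (subset_tsupport f hx)

lemma cs_of_bound {E : Type*} [NormedAddCommGroup E] [ProperSpace E] {f : E → ℂ} (R : ℝ)
    (h : ∀ x, f x ≠ 0 → ‖x‖ ≤ R) : HasCompactSupport f := by
  refine HasCompactSupport.intro (isCompact_closedBall (0 : E) R) fun x hx => ?_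
  by_contra h0
  exact hx (by simpa using h x h0)

lemma line_cs {E : Type*} [NormedAddCommGroup E] [NormedSpace ℝ E] {f : E → ℂ}
    (hf : HasCompactSupport f) (e x : E) (he : ‖e‖ = 1) :
    HasCompactSupport (fun t : ℝ => f (x - t • e)) := by
  obtain ⟨R, hR⟩ := cs_bound hf
  refine cs_of_bound (‖x‖ + R) fun t ht => ?_
  have h1 := hR _ ht
  have h2 : ‖t • e‖ ≤ ‖x‖ + ‖x - t • e‖ := by
    have := norm_sub_le x (x - t • e)
    simpa using this
  rw [norm_smul, he, mul_one] at h2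
  linarith

lemma line_integrable {E : Type*} [NormedAddCommGroup E] [NormedSpace ℝ E] {f : E → ℂ}
    (hc : Continuous f) (hf : HasCompactSupport f) (e x : E) (he : ‖e‖ = 1) :
    Integrable (fun t : ℝ => f (x - t • e)) :=
  Continuous.integrable_of_hasCompactSupport (by fun_prop) (line_cs hf e x he)

lemma contDiff_line {E : Type*} [NormedAddCommGroup E] [NormedSpace ℝ E] [FiniteDimensional ℝ E]
    [MeasurableSpace E] [BorelSpace E] {f : E → ℂ}
    (hs : ContDiff ℝ (⊤ : ℕ∞) f) (hf : HasCompactSupport f) (e : E) (he : ‖e‖ = 1) (A : Set ℝ) :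
    ContDiff ℝ (⊤ : ℕ∞) (fun x => ∫ t in A, f (x - t • e)) := by
  have hm : Measurable (fun t : ℝ => t • e) := by fun_prop
  let μ : Measure E := (volume.restrict A).map (fun t : ℝ => t • e)
  have hfin : IsLocallyFiniteMeasure μ := by
    refine ⟨fun x => ⟨Metric.ball x 1, Metric.ball_mem_nhds x one_pos, ?_⟩⟩
    rw [Measure.map_apply hm Metric.isOpen_ball.measurableSet]
    refine lt_of_le_of_lt (Measure.restrict_apply_le _ _) ?_
    refine lt_of_le_of_lt (measure_mono (t := Metric.closedBall 0 (‖x‖ + 1)) ?_)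
      measure_closedBall_lt_top
    intro t ht
    have h1 : ‖t • e - x‖ < 1 := by simpa [dist_eq_norm] using ht
    have h2 := norm_sub_norm_le (t • e) x
    rw [norm_smul, he, mul_one] at h2
    simp only [mem_closedBall_zero_iff]
    linarith
  have h1 : LocallyIntegrable (fun _ : E => (1 : ℝ)) μ := locallyIntegrable_const 1
  have := hf.contDiff_convolution_right (ContinuousLinearMap.lsmul ℝ ℝ) h1 hs
  convert this using 2 with x
  simp only [convolution, ContinuousLinearMap.lsmul_apply, one_smul]
  rw [integral_map hm.aemeasurable]
  exact (hs.continuous.comp (by fun_prop)).aestronglyMeasurable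

lemma line_fderiv {E : Type*} [NormedAddCommGroup E] [NormedSpace ℝ E] [FiniteDimensional ℝ E]
    [MeasurableSpace E] [BorelSpace E] {f : E → ℂ}
    (hs : ContDiff ℝ (⊤ : ℕ∞) f) (hf : HasCompactSupport f) (e : E) (he : ‖e‖ = 1) (x : E) :
    fderiv ℝ (fun x => ∫ t in Set.Ici (0:ℝ), f (x - t • e)) x e = f x := by
  set h : E → ℂ := fun x => ∫ t in Set.Ici (0:ℝ), f (x - t • e) with hh
  have hd : DifferentiableAt ℝ h x :=
    (contDiff_line hs hf e he (Set.Ici 0)).differentiable (by simp) x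
  have hint : Integrable (fun u : ℝ => f (x + u • e)) := by
    have := (line_integrable hs.continuous hf e x he).comp_neg
    simpa using this
  have key : ∀ s : ℝ, h (x + s • e) = ∫ u in Set.Iic s, f (x + u • e) := by
    intro s
    rw [← integral_indicator measurableSet_Iic, ← integral_sub_left_eq_self _ volume s]
    simp only [hh]
    rw [← integral_indicator measurableSet_Ici]
    congr 1
    ext t
    simp only [Set.indicator, Set.mem_Ici, Set.mem_Iic, sub_le_self_iff]
    congr 2
    rw [sub_smul]; abel
  have key2 : ∀ s : ℝ, h (x + s • e) =
      (∫ u in Set.Iic (0:ℝ), f (x + u • e)) + ∫ u in (0:ℝ)..s, f (x + u • e) := by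
    intro s
    rw [key, ← intervalIntegral.integral_Iic_sub_Iic hint.integrableOn hint.integrableOn]
    abel
  have hcont : Continuous (fun u : ℝ => f (x + u • e)) := hs.continuous.comp (by fun_prop)
  have d1 : HasDerivAt (fun s : ℝ => h (x + s • e)) (f (x + (0:ℝ) • e)) 0 := by
    simp_rw [key2]
    exact (hcont.integral_hasStrictDerivAt 0 0).hasDerivAt.const_add _
  have d2 : HasLineDerivAt ℝ h (fderiv ℝ h x e) x e := hd.hasFDerivAt.hasLineDerivAt e
  have := d2.unique d1
  simpa using this

lemma integral_fderiv_zero {n : ℕ} {h : EuclideanSpace ℝ (Fin n) → ℂ}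
    (hs : ContDiff ℝ (⊤ : ℕ∞) h) (hc : HasCompactSupport h) (i : Fin n) :
    Integrable (partialDeriv h i) ∧ ∫ x, partialDeriv h i x = 0 := by
  have hi : Integrable (partialDeriv h i) := by
    refine Continuous.integrable_of_hasCompactSupport ?_ ?_
    · exact (hs.continuous_fderiv (by simp)).clm_apply continuous_const
    · exact hc.fderiv_apply ℝ _
  refine ⟨hi, ?_⟩
  have := integral_smul_fderiv_eq_neg_fderiv_smul_of_integrable (𝕜 := ℝ)
    (μ := (volume : Measure (EuclideanSpace ℝ (Fin n))))
    (f := fun _ => (1:ℝ)) (g := h) (v := EuclideanSpace.single i 1) (by simp)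
    (by simpa [partialDeriv] using! hi)
    (by simpa using hs.continuous.integrable_of_hasCompactSupport hc)
    (by intros; fun_prop) (fun x _ => hs.differentiable (by simp) x)
  simpa [partialDeriv] using this

/-- averaging along the `i`-th axis -/
noncomputable def avgOp {n : ℕ} (ρ : ℝ → ℝ) (i : Fin n) (f : EuclideanSpace ℝ (Fin n) → ℂ) :
    EuclideanSpace ℝ (Fin n) → ℂ :=
  fun x => (∫ t : ℝ, f (x - t • EuclideanSpace.single i (1:ℝ))) * (ρ (x i) : ℂ)

lemma coord_le {n : ℕ} (x : EuclideanSpace ℝ (Fin n)) (i : Fin n) : |x i| ≤ ‖x‖ :=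
  PiLp.norm_apply_le x i

lemma norm_le_line {n : ℕ} (x : EuclideanSpace ℝ (Fin n)) (i : Fin n) (t : ℝ) :
    ‖x‖ ≤ ‖x - t • EuclideanSpace.single i (1:ℝ)‖ + |t| := by
  have h1 := norm_add_le (x - t • EuclideanSpace.single i (1:ℝ))
    (t • EuclideanSpace.single i (1:ℝ))
  rw [norm_smul] at h1
  simpa using h1

lemma coord_line {n : ℕ} (x : EuclideanSpace ℝ (Fin n)) (i : Fin n) (t : ℝ) :
    (x - t • EuclideanSpace.single i (1:ℝ)) i = x i - t := by simp

lemma exists_ne_of_setIntegral {A : Set ℝ} (hA : MeasurableSet A) {f : ℝ → ℂ}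
    (h : ∫ t in A, f t ≠ 0) : ∃ t ∈ A, f t ≠ 0 := by
  by_contra! hc
  exact h (setIntegral_eq_zero_of_forall_eq_zero hc)

lemma avg_contDiff {n : ℕ} {ρ : ℝ → ℝ} (hρ : ContDiff ℝ (⊤ : ℕ∞) ρ) (i : Fin n)
    {f : EuclideanSpace ℝ (Fin n) → ℂ} (hs : ContDiff ℝ (⊤ : ℕ∞) f) (hc : HasCompactSupport f) :
    ContDiff ℝ (⊤ : ℕ∞) (avgOp ρ i f) := by
  have h1 := contDiff_line hs hc (EuclideanSpace.single i (1:ℝ)) (by simp) Set.univ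
  simp only [Measure.restrict_univ] at h1
  refine h1.mul ?_
  have h2 : ContDiff ℝ (⊤ : ℕ∞) (fun x : EuclideanSpace ℝ (Fin n) => ρ (x i)) :=
    hρ.comp (by fun_prop)
  exact Complex.ofRealCLM.contDiff.comp h2

lemma avg_cs {n : ℕ} {ρ : ℝ → ℝ} {r : ℝ} (hρ : ∀ t, ρ t ≠ 0 → |t| ≤ r) (i : Fin n)
    {f : EuclideanSpace ℝ (Fin n) → ℂ} (hc : HasCompactSupport f) :
    HasCompactSupport (avgOp ρ i f) := by
  obtain ⟨R, hR⟩ := cs_bound hc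
  refine cs_of_bound (2 * R + r) fun x hx => ?_
  have h1 := left_ne_zero_of_mul hx
  have h2 := right_ne_zero_of_mul hx
  have h3 := hρ (x i) (by simpa using h2)
  obtain ⟨t, -, ht⟩ := exists_ne_of_setIntegral MeasurableSet.univ
    (by rwa [Measure.restrict_univ])
  have h4 := hR _ ht
  have h5 := norm_le_line x i t
  have h6 := coord_le (x - t • EuclideanSpace.single i (1:ℝ)) i
  rw [coord_line] at h6
  have h7 := abs_sub_abs_le_abs_sub t (x i)
  rw [abs_sub_comm] at h7
  linarith

lemma line_shift {n : ℕ} (i : Fin n) (f : EuclideanSpace ℝ (Fin n) → ℂ)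
    (x : EuclideanSpace ℝ (Fin n)) (s : ℝ) :
    ∫ t : ℝ, f (x - s • EuclideanSpace.single i (1:ℝ) - t • EuclideanSpace.single i (1:ℝ)) =
    ∫ t : ℝ, f (x - t • EuclideanSpace.single i (1:ℝ)) := by
  rw [← integral_add_left_eq_self (fun t : ℝ => f (x - t • EuclideanSpace.single i (1:ℝ))) s]
  congr 1
  ext t
  rw [add_smul, sub_sub]

lemma avg_line {n : ℕ} {ρ : ℝ → ℝ} (hρ : ∫ t, ρ t = 1) (i : Fin n)
    (f : EuclideanSpace ℝ (Fin n) → ℂ) (x : EuclideanSpace ℝ (Fin n)) :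
    ∫ t : ℝ, avgOp ρ i f (x - t • EuclideanSpace.single i (1:ℝ)) =
    ∫ t : ℝ, f (x - t • EuclideanSpace.single i (1:ℝ)) := by
  simp only [avgOp, line_shift, coord_line]
  rw [integral_const_mul, integral_sub_left_eq_self (fun t => (ρ t : ℂ)) volume (x i),
    integral_complex_ofReal, hρ]
  simp

lemma step {n : ℕ} {ρ : ℝ → ℝ} {r : ℝ} (hρ : ContDiff ℝ (⊤ : ℕ∞) ρ) (hρ1 : ∫ t, ρ t = 1)
    (hρr : ∀ t, ρ t ≠ 0 → |t| ≤ r) (i : Fin n)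
    {f : EuclideanSpace ℝ (Fin n) → ℂ} (hs : ContDiff ℝ (⊤ : ℕ∞) f) (hc : HasCompactSupport f) :
    ∃ h : EuclideanSpace ℝ (Fin n) → ℂ, ContDiff ℝ (⊤ : ℕ∞) h ∧ HasCompactSupport h ∧
      ∀ x, f x = avgOp ρ i f x + partialDeriv h i x := by
  set e : EuclideanSpace ℝ (Fin n) := EuclideanSpace.single i (1:ℝ) with he
  have hn : ‖e‖ = 1 := by simp [he]
  have hgs : ContDiff ℝ (⊤ : ℕ∞) (f - avgOp ρ i f) := hs.sub (avg_contDiff hρ i hs hc)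
  have hgc : HasCompactSupport (f - avgOp ρ i f) := hc.sub (avg_cs hρr i hc)
  have hg0 : ∀ x, ∫ t : ℝ, (f - avgOp ρ i f) (x - t • e) = 0 := by
    intro x
    simp only [Pi.sub_apply]
    rw [integral_sub (line_integrable hs.continuous hc e x hn)
      (line_integrable (avg_contDiff hρ i hs hc).continuous (avg_cs hρr i hc) e x hn),
      he, avg_line hρ1, sub_self]
  have hfd := line_fderiv hgs hgc e hn
  set g := f - avgOp ρ i f with hg
  refine ⟨fun x => ∫ t in Set.Ici (0:ℝ), g (x - t • e), contDiff_line hgs hgc e hn _, ?_, ?_⟩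
  · obtain ⟨R, hR⟩ := cs_bound hgc
    refine cs_of_bound (3 * R) fun x hx => ?_
    obtain ⟨t, ht0, ht⟩ := exists_ne_of_setIntegral measurableSet_Ici hx
    have hx' : ∫ t in (Set.Ici (0:ℝ))ᶜ, g (x - t • e) ≠ 0 := by
      intro h0
      have := integral_add_compl (s := Set.Ici (0:ℝ)) measurableSet_Ici
        (line_integrable hgs.continuous hgc e x hn)
      rw [hg0, h0, add_zero] at this
      exact hx this
    obtain ⟨s, hs0, hs1⟩ := exists_ne_of_setIntegral measurableSet_Ici.compl hx'
    have ht0 : 0 ≤ t := ht0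
    have hs0 : s < 0 := by simpa using hs0
    have a1 := hR _ ht
    have a2 := hR _ hs1
    have a3 := norm_le_line x i t
    have a4 := coord_le (x - t • e) i
    have a5 := coord_le (x - s • e) i
    rw [he, coord_line, abs_le] at a4 a5
    rw [abs_of_nonneg ht0] at a3
    linarith
  · intro x
    have := hfd x
    simp only [partialDeriv]
    rw [← he, this, hg]
    simp

lemma main_aux {n : ℕ} {ρ : ℝ → ℝ} {r : ℝ} (hρ : ContDiff ℝ (⊤ : ℕ∞) ρ) (hρ1 : ∫ t, ρ t = 1)
    (hρr : ∀ t, ρ t ≠ 0 → |t| ≤ r)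
    {f : EuclideanSpace ℝ (Fin n) → ℂ} (hs : ContDiff ℝ (⊤ : ℕ∞) f) (hc : HasCompactSupport f)
    (S : Finset (Fin n)) :
    ∃ (h : Fin n → EuclideanSpace ℝ (Fin n) → ℂ) (g G : EuclideanSpace ℝ (Fin n) → ℂ),
      (∀ i, ContDiff ℝ (⊤ : ℕ∞) (h i)) ∧ (∀ i, HasCompactSupport (h i)) ∧
      ContDiff ℝ (⊤ : ℕ∞) g ∧ HasCompactSupport g ∧
      (∀ x, f x = g x + ∑ i ∈ S, partialDeriv (h i) i x) ∧
      (∀ x, g x = G x * ∏ i ∈ S, (ρ (x i) : ℂ)) ∧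
      (∀ x y, (∀ i ∉ S, x i = y i) → G x = G y) := by
  classical
  induction S using Finset.induction_on with
  | empty =>
    refine ⟨fun _ => 0, f, f, fun _ => contDiff_const, fun _ => HasCompactSupport.zero, hs, hc,
      by simp, by simp, ?_⟩
    intro x y hxy
    congr 1
    ext i
    exact hxy i (by simp)
  | insert i S hi ih =>
    obtain ⟨h, g, G, h1, h2, h3, h4, h5, h6, h7⟩ := ih
    obtain ⟨k, k1, k2, k3⟩ := step hρ hρ1 hρr i h3 h4
    refine ⟨Function.update h i k, avgOp ρ i g,
      fun x => ∫ t : ℝ, G (x - t • EuclideanSpace.single i (1:ℝ)), ?_, ?_,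
      avg_contDiff hρ i h3 h4, avg_cs hρr i h4, ?_, ?_, ?_⟩
    · intro j
      by_cases hj : j = i
      · subst hj; simpa using k1
      · simpa [hj] using h1 j
    · intro j
      by_cases hj : j = i
      · subst hj; simpa using k2
      · simpa [hj] using h2 j
    · intro x
      rw [h5, k3, Finset.sum_insert hi]
      simp only [Function.update_self, add_assoc]
      congr 2
      refine Finset.sum_congr rfl fun j hj => ?_
      have hne : j ≠ i := fun h => hi (h ▸ hj)
      rw [Function.update_of_ne hne]
    · intro x
      simp only [avgOp]
      have : ∀ t : ℝ, g (x - t • EuclideanSpace.single i (1:ℝ)) =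
          G (x - t • EuclideanSpace.single i (1:ℝ)) * ∏ j ∈ S, (ρ (x j) : ℂ) := by
        intro t
        rw [h6]
        congr 1
        refine Finset.prod_congr rfl fun j hj => ?_
        have hne : j ≠ i := fun h => hi (h ▸ hj)
        simp [hne]
      simp only [this]
      rw [integral_mul_const, Finset.prod_insert hi]
      ring
    · intro x y hxy
      dsimp only
      rw [← line_shift i G y (y i - x i)]
      congr 1
      ext t
      apply h7
      intro j hj
      by_cases hji : j = i
      · subst hji; simp
      · have := hxy j (by simp [hji, hj])
        simp [hji, this]

end helpers

theorem divergence_rep_iff_integral_eq_zero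
    (n : ℕ) (hn : 1 ≤ n)
    (f : EuclideanSpace ℝ (Fin n) → ℂ)
    (hf : ContDiff ℝ (⊤ : ℕ∞) f)
    (hfc : HasCompactSupport f) :
    (∃ h : Fin n → EuclideanSpace ℝ (Fin n) → ℂ,
        (∀ i, ContDiff ℝ (⊤ : ℕ∞) (h i)) ∧
        (∀ i, HasCompactSupport (h i)) ∧
        f = fun x => ∑ i, partialDeriv (h i) i x) ↔
      ∫ x, f x = 0 := by
  constructor
  · rintro ⟨h, h1, h2, rfl⟩
    rw [integral_finsetSum _ fun i _ => (integral_fderiv_zero (h1 i) (h2 i) i).1]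
    exact Finset.sum_eq_zero fun i _ => (integral_fderiv_zero (h1 i) (h2 i) i).2
  · intro h0
    let φ : ContDiffBump (0 : ℝ) := ⟨1, 2, one_pos, one_lt_two⟩
    have hρ : ContDiff ℝ (⊤ : ℕ∞) (φ.normed volume) := φ.contDiff_normed
    have hρ1 : ∫ t, φ.normed volume t = 1 := φ.integral_normed
    have hρr : ∀ t, φ.normed volume t ≠ 0 → |t| ≤ 2 := by
      intro t ht
      have : t ∈ Function.support (φ.normed volume) := ht
      rw [φ.support_normed_eq] at this
      have : |t| < 2 := by simpa using this
      exact this.le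
    generalize φ.normed volume = ρ at hρ hρ1 hρr
    obtain ⟨h, g, G, h1, h2, h3, h4, h5, h6, h7⟩ := main_aux hρ hρ1 hρr hf hfc Finset.univ
    refine ⟨h, h1, h2, ?_⟩
    have hG : ∀ x, g x = G 0 * ∏ i, (ρ (x i) : ℂ) := by
      intro x
      rw [h6, h7 x 0 (by simp)]
    have hgi : ∫ x, g x = 0 := by
      have : ∫ x, f x = (∫ x, g x) + ∫ x, ∑ i, partialDeriv (h i) i x := by
        rw [← integral_add (h3.continuous.integrable_of_hasCompactSupport h4)
          (integrable_finsetSum _ fun i _ => (integral_fderiv_zero (h1 i) (h2 i) i).1)]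
        exact integral_congr_ae (Filter.Eventually.of_forall h5)
      rw [h0, integral_finsetSum _ fun i _ => (integral_fderiv_zero (h1 i) (h2 i) i).1,
        Finset.sum_eq_zero fun i _ => (integral_fderiv_zero (h1 i) (h2 i) i).2, add_zero] at this
      exact this.symm
    have hprod : ∫ x : EuclideanSpace ℝ (Fin n), ∏ i, (ρ (x i) : ℂ) = 1 := by
      have e1 := (EuclideanSpace.volume_preserving_symm_measurableEquiv_toLp (Fin n)).symm.integral_comp'
        (fun x : EuclideanSpace ℝ (Fin n) => ∏ i, (ρ (x i) : ℂ))
      rw [← e1]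
      have e2 := integral_fintype_prod_volume_eq_prod (𝕜 := ℂ) (ι := Fin n) (E := fun _ => ℝ)
        (fun _ t => (ρ t : ℂ))
      simp only [integral_complex_ofReal, hρ1] at e2
      simpa using e2
    have hG0 : G 0 = 0 := by
      simp only [hG] at hgi
      rw [integral_const_mul, hprod, mul_one] at hgi
      exact hgi
    ext x
    rw [h5, hG, hG0]
    simp
end
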